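/- Splitting occurrences across a concatenation: let 𝔰 = {[n₁]} • ⋯ • {[n_k]} ∈ IPs be a concatenation of single blocks of sizes n₁,…,n_k ≥ 1, and let 𝔏, 𝔐 ∈ IPs with 𝔐' the shift of 𝔐 by |⋃𝔏|. Then {A ⊆ ⋃(𝔏 • 𝔐) : std((𝔏 • 𝔐)(A)) ≥ 𝔰} is the disjoint union over r = 0, 1, …, k of the sets {A ⊆ ⋃(𝔏 • 𝔐) : std((𝔏 • 𝔐)(A ∩ ⋃𝔏)) ≥ {[n₁]} • ⋯ • {[n_r]} and std((𝔏 • 𝔐)(A ∩ ⋃𝔐')) ≥ {[n_{r+1}]} • ⋯ • {[n_k]}} (empty concatenations being the empty partition). -/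

import Mathlib

/-! The cut at `c = |⋃𝔏|` is never straddled by a block of `𝔎 = 𝔏 • 𝔐`. Hence, for
`A ⊆ ⋃𝔎` with parts `A₁ = A ∩ ⋃𝔏` and `A₂ = A ∩ ⋃𝔐'`, the blocks of `𝔎(A)` are those of
`𝔎(A₁)` together with those of `𝔎(A₂)` (`restrictIP_split`), and after standardization
`std 𝔎(A) = std 𝔎(A₁) • std 𝔎(A₂)` (`stdIP_union`).

On the other side, the concatenation of the list `ns` is the concatenation of its first `r`
and its remaining blocks (`concatList_append`), and concatenations whose left factors have the
same size are comparable if and only if their factors are (`IPle_concatIP_iff`). So `A` lies in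
the `r`-th piece exactly when it is an occurrence and `n₁ + ⋯ + n_r = |A₁|`. Such an `r` exists
for every occurrence, because no block of `concatList ns` straddles `|A₁|` (`exists_take_sum`),
and it is unique because the `nᵢ` are positive (`take_sum_lt`). -/

open Set

/-- A block: a nonempty interval of consecutive positive integers. -/
def IsIntervalBlock (B : Set ℕ) : Prop :=
  B.Nonempty ∧ (∀ x ∈ B, 1 ≤ x) ∧
    ∀ x ∈ B, ∀ z ∈ B, ∀ y : ℕ, x ≤ y → y ≤ z → y ∈ B

/-- An interval partition of a finite subset of the positive integers:
a family of pairwise disjoint nonempty intervals with finite ground set. -/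
def IsIntervalPartition (P : Set (Set ℕ)) : Prop :=
  (⋃₀ P).Finite ∧ (∀ B ∈ P, IsIntervalBlock B) ∧
    ∀ B ∈ P, ∀ C ∈ P, B ≠ C → B ∩ C = ∅

/-- An interval partition with prescribed ground set `A`. -/
def IsIntervalPartitionOf (P : Set (Set ℕ)) (A : Set ℕ) : Prop :=
  IsIntervalPartition P ∧ ⋃₀ P = A

/-- Standardized interval partitions: interval partitions of `{1, …, n}`. -/
def IsStdIP (P : Set (Set ℕ)) : Prop :=
  IsIntervalPartition P ∧ ∃ n : ℕ, ⋃₀ P = Set.Icc 1 n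

/-- Refinement order: same ground set, and every block of `P`
is contained in some block of `Q`. -/
def IPle (P Q : Set (Set ℕ)) : Prop :=
  ⋃₀ P = ⋃₀ Q ∧ ∀ B ∈ P, ∃ C ∈ Q, B ⊆ C

/-- The equivalence relation on blocks generated by having nonempty
intersection (among members of `S`). -/
def glueRel (S : Set (Set ℕ)) : Set ℕ → Set ℕ → Prop :=
  Relation.EqvGen fun X Y => X ∈ S ∧ Y ∈ S ∧ (X ∩ Y).Nonempty

/-- Gluing of two interval partitions. -/
def glue (P Q : Set (Set ℕ)) : Set (Set ℕ) :=
  (fun T => ⋃₀ {X ∈ P ∪ Q | glueRel (P ∪ Q) T X}) '' (P ∪ Q)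

/-- The relation on `A` generated by `y = x + 1`. -/
def cliqueRel (A : Set ℕ) : ℕ → ℕ → Prop :=
  Relation.EqvGen fun x y => x ∈ A ∧ y ∈ A ∧ y = x + 1

/-- `cliques A`: the coarsest interval partition of `A`. -/
def cliques (A : Set ℕ) : Set (Set ℕ) :=
  (fun x => {y ∈ A | cliqueRel A x y}) '' A

/-- `𝓘(A)`: the interval partition of `A ∩ ⋃₀ 𝓘` induced by `𝓘`. -/
def restrictIP (P : Set (Set ℕ)) (A : Set ℕ) : Set (Set ℕ) :=
  {Z | Z ≠ ∅ ∧ ∃ B ∈ P, ∃ c ∈ cliques A, Z = B ∩ c}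

/-- The unique order preserving map sending a finite `S ⊆ ℕ` onto `{1,…,|S|}`. -/
noncomputable def stdMap (S : Set ℕ) (x : ℕ) : ℕ := {y ∈ S | y ≤ x}.ncard

/-- Standardization of an interval partition. -/
noncomputable def stdIP (P : Set (Set ℕ)) : Set (Set ℕ) :=
  (fun B => stdMap (⋃₀ P) '' B) '' P

/-- Shifting all blocks of a partition up by `m`. -/
def shiftIP (m : ℕ) (P : Set (Set ℕ)) : Set (Set ℕ) :=
  (fun B => (fun x => x + m) '' B) '' P

/-- Concatenation of standardized interval partitions. -/
noncomputable def concatIP (P Q : Set (Set ℕ)) : Set (Set ℕ) :=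
  P ∪ shiftIP (⋃₀ P).ncard Q

/-- Quasi-shuffle section coefficient `c(𝔰,𝔱;𝔤)`. -/
noncomputable def secCoeff (s t g : Set (Set ℕ)) : ℕ :=
  {p : Set ℕ × Set ℕ | p.1 ∪ p.2 = ⋃₀ g ∧
      ∃ I I' : Set (Set ℕ), IsIntervalPartitionOf I p.1 ∧ IsIntervalPartitionOf I' p.2 ∧
        stdIP I = s ∧ stdIP I' = t ∧ glue I I' = g}.ncard

/-- The signature pairing `⟨IPC(𝔏), 𝔰⟩`. -/
noncomputable def IPC (L s : Set (Set ℕ)) : ℕ :=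
  {A : Set ℕ | A ⊆ ⋃₀ L ∧ IPle s (stdIP (restrictIP L A))}.ncard

open Classical in
/-- The unique refinement `𝓘_𝔰` of `𝓘` with standardization `𝔰` (junk value otherwise). -/
noncomputable def refineTo (P s : Set (Set ℕ)) : Set (Set ℕ) :=
  if h : ∃ Q : Set (Set ℕ), IsIntervalPartition Q ∧ IPle Q P ∧ stdIP Q = s then h.choose
  else ∅

/-- The concatenation of single blocks of the sizes listed in `l`. -/
noncomputable def concatList (l : List ℕ) : Set (Set ℕ) :=
  l.foldl (fun acc m => concatIP acc {Set.Icc 1 m}) ∅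

/-- A permutation of `{1,…,n}`, encoded as a function on `ℕ` fixing everything else. -/
def IsPermOf (n : ℕ) (σ : ℕ → ℕ) : Prop :=
  Set.BijOn σ (Set.Icc 1 n) (Set.Icc 1 n) ∧ ∀ x : ℕ, x ∉ Set.Icc 1 n → σ x = x

open Classical in
/-- The `i`-th smallest element of `A` (junk value otherwise). -/
noncomputable def nthElt (A : Set ℕ) (i : ℕ) : ℕ :=
  if h : ∃ x ∈ A, stdMap A x = i then h.choose else 0

/-- Standardization `st(Λ|_A)` of `Λ` restricted to `A`: the permutation of `{1,…,|A|}`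
recording the relative order of the values of `Λ` on `A`. -/
noncomputable def stdRestrict (lam : ℕ → ℕ) (A : Set ℕ) : ℕ → ℕ := fun i =>
  if 1 ≤ i ∧ i ≤ A.ncard then {b ∈ A | lam b ≤ lam (nthElt A i)}.ncard else i

/-- Concatenation `σ ⊡ τ` of permutations of `{1,…,m}` and `{1,…,n}`. -/
def permConcat (m n : ℕ) (σ τ : ℕ → ℕ) : ℕ → ℕ := fun i =>
  if 1 ≤ i ∧ i ≤ m then σ i
  else if m + 1 ≤ i ∧ i ≤ m + n then τ (i - m) + m
  else i

/-- A vincular pattern: a standardized interval partition of `{1,…,n}`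
together with a permutation of `{1,…,n}`. -/
def IsVincular (p : Set (Set ℕ) × (ℕ → ℕ)) : Prop :=
  ∃ n : ℕ, IsIntervalPartitionOf p.1 (Set.Icc 1 n) ∧ IsPermOf n p.2

/-- Concatenation of vincular patterns. -/
noncomputable def vincConcat (p q : Set (Set ℕ) × (ℕ → ℕ)) : Set (Set ℕ) × (ℕ → ℕ) :=
  (concatIP p.1 q.1, permConcat (⋃₀ p.1).ncard (⋃₀ q.1).ncard p.2 q.2)

/-- Vincular section coefficient `C((𝔰,σ),(𝔱,τ);(𝔤,γ))`. -/
noncomputable def vincCoeff (p q r : Set (Set ℕ) × (ℕ → ℕ)) : ℕ :=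
  {AB : Set ℕ × Set ℕ | AB.1 ∪ AB.2 = ⋃₀ r.1 ∧
      (∃ I I' : Set (Set ℕ), IsIntervalPartitionOf I AB.1 ∧ IsIntervalPartitionOf I' AB.2 ∧
        stdIP I = p.1 ∧ stdIP I' = q.1 ∧ glue I I' = r.1) ∧
      stdRestrict r.2 AB.1 = p.2 ∧ stdRestrict r.2 AB.2 = q.2}.ncard

/-- Vincular signature pairing `⟨GPC(𝔏,Λ), (𝔰,σ)⟩`. -/
noncomputable def GPC (L : Set (Set ℕ)) (lam : ℕ → ℕ) (p : Set (Set ℕ) × (ℕ → ℕ)) : ℕ :=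
  {A : Set ℕ | A ⊆ ⋃₀ L ∧ IPle p.1 (stdIP (restrictIP L A)) ∧ stdRestrict lam A = p.2}.ncard

/-- The `r`-th piece: occurrences whose first `r` blocks land in `⋃𝔏` and the
remaining ones in the shifted ground set of `𝔐`. -/
noncomputable def piece16 (L M : Set (Set ℕ)) (ns : List ℕ) (r : ℕ) : Set (Set ℕ) :=
  {A : Set ℕ | A ⊆ ⋃₀ (concatIP L M) ∧
    IPle (concatList (ns.take r)) (stdIP (restrictIP (concatIP L M) (A ∩ ⋃₀ L))) ∧
    IPle (concatList (ns.drop r))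
      (stdIP (restrictIP (concatIP L M) (A ∩ ⋃₀ (shiftIP (⋃₀ L).ncard M))))}


/-! ### Cliques and restriction -/

lemma cliqueRel_iff {A : Set ℕ} {x y : ℕ} (hx : x ∈ A) :
    cliqueRel A x y ↔ Set.uIcc x y ⊆ A := by
  have up : ∀ (k u : ℕ), Set.Icc u (u + k) ⊆ A → cliqueRel A u (u + k) := by
    intro k
    induction k with
    | zero => intro u _; exact Relation.EqvGen.refl _
    | succ k ih =>
      intro u h
      refine Relation.EqvGen.trans _ _ _ (ih u fun z hz => h ⟨hz.1, by have := hz.2; omega⟩)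
        (Relation.EqvGen.rel _ _ ⟨h ⟨by omega, by omega⟩, h ⟨by omega, by omega⟩, by omega⟩)
  constructor
  · intro h
    suffices H : x = y ∨ Set.uIcc x y ⊆ A by
      rcases H with rfl | H
      · simpa using hx
      · exact H
    clear hx
    induction h with
    | rel x y h =>
      right
      obtain ⟨h1, h2, rfl⟩ := h
      intro z hz
      rw [Set.uIcc_of_le (by omega)] at hz
      obtain ⟨h3, h4⟩ := hz
      rcases (by omega : z = x ∨ z = x + 1) with rfl | rfl <;> assumption
    | refl x => left; rfl
    | symm x y _ ih =>
      rw [Set.uIcc_comm]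
      exact ih.imp Eq.symm id
    | trans x y z _ _ ih1 ih2 =>
      rcases ih1 with rfl | ih1
      · exact ih2
      rcases ih2 with rfl | ih2
      · exact Or.inr ih1
      · exact Or.inr (Set.uIcc_subset_uIcc_union_uIcc.trans (Set.union_subset ih1 ih2))
  · intro h
    rcases le_total x y with hxy | hxy
    · rw [Set.uIcc_of_le hxy] at h
      obtain ⟨k, rfl⟩ := Nat.exists_eq_add_of_le hxy
      exact up k x h
    · rw [Set.uIcc_of_ge hxy] at h
      obtain ⟨k, rfl⟩ := Nat.exists_eq_add_of_le hxy
      exact Relation.EqvGen.symm _ _ (up k y h)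

/-- Each block of `P(A)` is determined by any of its points `z`: it consists of the points of the
block of `P` containing `z` that are joined to `z` inside `A`. -/
lemma mem_restrictIP_iff {P : Set (Set ℕ)} {A Z : Set ℕ} :
    Z ∈ restrictIP P A ↔
      ∃ B ∈ P, ∃ z ∈ A, z ∈ B ∧ Z = {y ∈ B | Set.uIcc z y ⊆ A} := by
  constructor
  · rintro ⟨hne, B, hB, c, ⟨x, hx, rfl⟩, rfl⟩
    obtain ⟨z, hzB, hzA, hxz⟩ := Set.nonempty_iff_ne_empty.mpr hne
    refine ⟨B, hB, z, hzA, hzB, ?_⟩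
    ext y
    constructor
    · rintro ⟨hy, _, hxy⟩
      exact ⟨hy, (cliqueRel_iff hzA).1
        (Relation.EqvGen.trans _ _ _ (Relation.EqvGen.symm _ _ hxz) hxy)⟩
    · rintro ⟨hy, hzy⟩
      exact ⟨hy, hzy Set.right_mem_uIcc,
        Relation.EqvGen.trans _ _ _ hxz ((cliqueRel_iff hzA).2 hzy)⟩
  · rintro ⟨B, hB, z, hzA, hzB, rfl⟩
    refine ⟨Set.nonempty_iff_ne_empty.mp ⟨z, hzB, by simpa using hzA⟩, B, hB, _, ⟨z, hzA, rfl⟩, ?_⟩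
    ext y
    constructor
    · rintro ⟨hy, hzy⟩
      exact ⟨hy, hzy Set.right_mem_uIcc, (cliqueRel_iff hzA).2 hzy⟩
    · rintro ⟨hy, _, hxy⟩
      exact ⟨hy, (cliqueRel_iff hzA).1 hxy⟩

lemma sUnion_restrictIP {P : Set (Set ℕ)} {A : Set ℕ} (hA : A ⊆ ⋃₀ P) :
    ⋃₀ restrictIP P A = A := by
  ext x
  constructor
  · rintro ⟨Z, hZ, hx⟩
    obtain ⟨B, _, z, _, _, rfl⟩ := mem_restrictIP_iff.1 hZ
    exact hx.2 Set.right_mem_uIcc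
  · intro hx
    obtain ⟨B, hB, hxB⟩ := hA hx
    exact ⟨_, mem_restrictIP_iff.2 ⟨B, hB, x, hx, hxB, rfl⟩, hxB, by simpa using hx⟩

lemma restrictIP_split {P : Set (Set ℕ)} {A G H : Set ℕ}
    (hP : ∀ B ∈ P, IsIntervalBlock B) (hGH : Disjoint G H)
    (hcut : ∀ B ∈ P, B ⊆ G ∨ B ⊆ H) :
    restrictIP P A = restrictIP P (A ∩ G) ∪ restrictIP P (A ∩ H) := by
  -- the part of `A` inside a set containing the whole block `B` sees the same points of `B`
  have key : ∀ B ∈ P, ∀ z ∈ B, ∀ T : Set ℕ, B ⊆ T →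
      {y ∈ B | Set.uIcc z y ⊆ A} = {y ∈ B | Set.uIcc z y ⊆ A ∩ T} := by
    intro B hB z hz T hT
    ext y
    refine and_congr_right fun hy => ⟨fun h => Set.subset_inter h fun w hw => hT ?_,
      fun h => h.trans Set.inter_subset_left⟩
    have hI := (hP B hB).2.2
    rcases Set.mem_uIcc.1 hw with h | h
    · exact hI z hz y hy w h.1 h.2
    · exact hI y hy z hz w h.1 h.2
  ext Z
  simp only [Set.mem_union, mem_restrictIP_iff]
  constructor
  · rintro ⟨B, hB, z, hzA, hzB, rfl⟩
    rcases hcut B hB with h | h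
    · exact Or.inl ⟨B, hB, z, ⟨hzA, h hzB⟩, hzB, key B hB z hzB _ h⟩
    · exact Or.inr ⟨B, hB, z, ⟨hzA, h hzB⟩, hzB, key B hB z hzB _ h⟩
  · rintro (⟨B, hB, z, hzA, hzB, rfl⟩ | ⟨B, hB, z, hzA, hzB, rfl⟩)
    · rcases hcut B hB with h | h
      · exact ⟨B, hB, z, hzA.1, hzB, (key B hB z hzB _ h).symm⟩
      · exact (Set.disjoint_left.1 hGH hzA.2 (h hzB)).elim
    · rcases hcut B hB with h | h
      · exact (Set.disjoint_left.1 hGH (h hzB) hzA.2).elim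
      · exact ⟨B, hB, z, hzA.1, hzB, (key B hB z hzB _ h).symm⟩

/-! ### Standardization -/

lemma stdMap_image {S : Set ℕ} (hS : S.Finite) : stdMap S '' S = Set.Icc 1 S.ncard := by
  have hmono : StrictMonoOn (stdMap S) S := by
    intro x _ y hy hxy
    refine Set.ncard_lt_ncard ⟨fun z hz => ⟨hz.1, hz.2.trans hxy.le⟩, fun h => ?_⟩
      (hS.subset fun z hz => hz.1)
    exact absurd (h ⟨hy, le_rfl⟩).2 (by omega)
  refine Set.eq_of_subset_of_ncard_le ?_ ?_ (Set.finite_Icc _ _)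
  · rintro _ ⟨x, hx, rfl⟩
    refine ⟨?_, Set.ncard_le_ncard (fun z hz => hz.1) hS⟩
    exact (Set.ncard_pos (hS.subset fun z hz => hz.1)).2 ⟨x, hx, le_rfl⟩
  · rw [hmono.injOn.ncard_image]
    simp [Set.ncard_eq_toFinset_card']

lemma sUnion_stdIP {P : Set (Set ℕ)} (hP : (⋃₀ P).Finite) :
    ⋃₀ stdIP P = Set.Icc 1 (⋃₀ P).ncard := by
  rw [← stdMap_image hP]
  conv_rhs => rw [Set.sUnion_eq_biUnion, Set.image_iUnion₂]
  simp [stdIP, Set.sUnion_eq_biUnion]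

/-- Standardizing the union of two partitions, the first of which lies to the left of the second,
concatenates the standardizations. -/
lemma stdIP_union {P Q : Set (Set ℕ)} {c : ℕ} (hP : (⋃₀ P).Finite) (hQ : (⋃₀ Q).Finite)
    (hPc : ∀ x ∈ ⋃₀ P, x ≤ c) (hQc : ∀ x ∈ ⋃₀ Q, c < x) :
    stdIP (P ∪ Q) = concatIP (stdIP P) (stdIP Q) := by
  have h1 : ∀ B ∈ P, stdMap (⋃₀ (P ∪ Q)) '' B = stdMap (⋃₀ P) '' B := by
    intro B hB
    refine Set.image_congr fun x hx => ?_
    have hxc := hPc x ⟨B, hB, hx⟩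
    unfold stdMap
    congr 1
    ext y
    rw [Set.sUnion_union]
    constructor
    · rintro ⟨hy | hy, hyx⟩
      · exact ⟨hy, hyx⟩
      · have := hQc y hy
        omega
    · rintro ⟨hy, hyx⟩
      exact ⟨Or.inl hy, hyx⟩
  have h2 : ∀ B ∈ Q, stdMap (⋃₀ (P ∪ Q)) '' B
      = (fun x => x + (⋃₀ P).ncard) '' (stdMap (⋃₀ Q) '' B) := by
    intro B hB
    rw [Set.image_image]
    refine Set.image_congr fun x hx => ?_
    have hxc := hQc x ⟨B, hB, hx⟩
    have hset : {y ∈ ⋃₀ (P ∪ Q) | y ≤ x} = {y ∈ ⋃₀ Q | y ≤ x} ∪ ⋃₀ P := by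
      ext y
      rw [Set.sUnion_union]
      constructor
      · rintro ⟨hy | hy, hyx⟩
        · exact Or.inr hy
        · exact Or.inl ⟨hy, hyx⟩
      · rintro (⟨hy, hyx⟩ | hy)
        · exact ⟨Or.inr hy, hyx⟩
        · have := hPc y hy
          exact ⟨Or.inl hy, by omega⟩
    unfold stdMap
    rw [hset, Set.ncard_union_eq _ (hQ.subset fun z hz => hz.1) hP]
    refine Set.disjoint_left.2 fun y hy hy' => ?_
    have := hPc y hy'
    have := hQc y hy.1
    omega
  have hcard : (⋃₀ stdIP P).ncard = (⋃₀ P).ncard := by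
    rw [sUnion_stdIP hP]
    simp [Set.ncard_eq_toFinset_card']
  unfold concatIP
  rw [hcard]
  unfold shiftIP
  conv_lhs => unfold stdIP
  rw [Set.image_union, Set.image_congr h1, Set.image_congr h2]
  congr 1
  simp only [stdIP, Set.image_image]

/-! ### Concatenation -/

lemma ncard_Icc_one (a : ℕ) : (Set.Icc 1 a).ncard = a := by
  simp [Set.ncard_eq_toFinset_card']

lemma sUnion_shiftIP (m : ℕ) (P : Set (Set ℕ)) :
    ⋃₀ shiftIP m P = (fun x => x + m) '' ⋃₀ P := by
  conv_rhs => rw [Set.sUnion_eq_biUnion, Set.image_iUnion₂]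
  simp [shiftIP, Set.sUnion_image]

lemma sUnion_concatIP {P Q : Set (Set ℕ)} {a b : ℕ} (hP : ⋃₀ P = Set.Icc 1 a)
    (hQ : ⋃₀ Q = Set.Icc 1 b) : ⋃₀ concatIP P Q = Set.Icc 1 (a + b) := by
  rw [concatIP, Set.sUnion_union, sUnion_shiftIP, hP, hQ, ncard_Icc_one, Set.image_add_const_Icc]
  ext x
  simp only [Set.mem_union, Set.mem_Icc]
  omega

lemma concatIP_assoc {P Q R : Set (Set ℕ)} {a b : ℕ} (hP : ⋃₀ P = Set.Icc 1 a)
    (hQ : ⋃₀ Q = Set.Icc 1 b) :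
    concatIP (concatIP P Q) R = concatIP P (concatIP Q R) := by
  have h := sUnion_concatIP hP hQ
  rw [concatIP, h, concatIP, concatIP, concatIP, hP, hQ]
  simp only [ncard_Icc_one, shiftIP, Set.image_union, Set.image_image, Set.union_assoc, add_assoc,
    add_comm b a]

lemma concatList_concat (l : List ℕ) (n : ℕ) :
    concatList (l ++ [n]) = concatIP (concatList l) {Set.Icc 1 n} := by
  simp [concatList]

lemma sUnion_concatList (l : List ℕ) : ⋃₀ concatList l = Set.Icc 1 l.sum := by
  induction l using List.reverseRecOn with
  | nil => simp [concatList]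
  | append_singleton l n ih =>
    rw [concatList_concat, sUnion_concatIP ih (Set.sUnion_singleton _)]
    simp

lemma concatList_append (l l' : List ℕ) :
    concatList (l ++ l') = concatIP (concatList l) (concatList l') := by
  induction l' using List.reverseRecOn with
  | nil => simp [concatList, concatIP, shiftIP]
  | append_singleton l' n ih =>
    rw [← List.append_assoc, concatList_concat, ih, concatList_concat,
      concatIP_assoc (sUnion_concatList l) (sUnion_concatList l')]

lemma concatList_nonempty {l : List ℕ} (hl : ∀ m ∈ l, 1 ≤ m) :
    ∀ B ∈ concatList l, B.Nonempty := by
  induction l using List.reverseRecOn with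
  | nil => simp [concatList]
  | append_singleton l n ih =>
    rw [concatList_concat]
    rintro B (hB | ⟨_, rfl, rfl⟩)
    · exact ih (fun m hm => hl m (by simp [hm])) B hB
    · exact (Set.nonempty_Icc.2 (hl n (by simp))).image _

lemma IPle_concatIP_iff {P Q P' Q' : Set (Set ℕ)} {a b b' : ℕ}
    (hP : ⋃₀ P = Set.Icc 1 a) (hQ : ⋃₀ Q = Set.Icc 1 b)
    (hP' : ⋃₀ P' = Set.Icc 1 a) (hQ' : ⋃₀ Q' = Set.Icc 1 b')
    (hPne : ∀ B ∈ P, B.Nonempty) (hQne : ∀ B ∈ Q, B.Nonempty) :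
    IPle (concatIP P Q) (concatIP P' Q') ↔ IPle P P' ∧ IPle Q Q' := by
  have mem : ∀ {R : Set (Set ℕ)} {r : ℕ}, ⋃₀ R = Set.Icc 1 r → ∀ B ∈ R, ∀ x ∈ B, 1 ≤ x ∧ x ≤ r :=
    fun h B hB x hx => h.subset (Set.mem_sUnion_of_mem hx hB)
  constructor
  · rintro ⟨hu, hle⟩
    rw [sUnion_concatIP hP hQ, sUnion_concatIP hP' hQ'] at hu
    have hb : b = b' := by
      have := congrArg Set.ncard hu
      rw [ncard_Icc_one, ncard_Icc_one] at this
      omega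
    subst hb
    refine ⟨⟨hP.trans hP'.symm, fun B hB => ?_⟩, hQ.trans hQ'.symm, fun B hB => ?_⟩
    · obtain ⟨C, hC | ⟨C, hC, rfl⟩, hBC⟩ := hle B (Or.inl hB)
      · exact ⟨C, hC, hBC⟩
      · obtain ⟨x, hx⟩ := hPne B hB
        obtain ⟨y, hy, hyx⟩ := hBC hx
        have h1 := mem hP B hB x hx
        have h2 := mem hQ' C hC y hy
        simp only [hP', ncard_Icc_one] at hyx
        omega
    · obtain ⟨C, hC, hBC⟩ := hle _ (Or.inr ⟨B, hB, rfl⟩)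
      rw [hP, ncard_Icc_one] at hBC
      rcases hC with hC | ⟨C, hC, rfl⟩
      · obtain ⟨x, hx⟩ := hQne B hB
        have h1 := mem hQ B hB x hx
        have h2 := mem hP' C hC _ (hBC ⟨x, hx, rfl⟩)
        simp only at h2
        omega
      · simp only [hP', ncard_Icc_one] at hBC
        exact ⟨C, hC, (Set.image_subset_image_iff (add_left_injective a)).1 hBC⟩
  · rintro ⟨⟨_, h1⟩, hu, h2⟩
    refine ⟨?_, ?_⟩
    · rw [sUnion_concatIP hP hQ, sUnion_concatIP hP' (hu.symm.trans hQ)]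
    · rintro B (hB | ⟨B, hB, rfl⟩)
      · obtain ⟨C, hC, hBC⟩ := h1 B hB
        exact ⟨C, Or.inl hC, hBC⟩
      · obtain ⟨C, hC, hBC⟩ := h2 B hB
        refine ⟨_, Or.inr ⟨C, hC, rfl⟩, ?_⟩
        simp only [hP, hP']
        exact Set.image_mono hBC

/-! ### Partial sums of the block sizes -/

/-- If no block of `concatList l` straddles `k`, then `k` is a partial sum of `l`. -/
lemma exists_take_sum {l : List ℕ} (hl : ∀ m ∈ l, 1 ≤ m) {k : ℕ} (hk : k ≤ l.sum)
    (hcut : ∀ B ∈ concatList l, (∀ x ∈ B, x ≤ k) ∨ (∀ x ∈ B, k < x)) :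
    ∃ r ≤ l.length, (l.take r).sum = k := by
  induction l using List.reverseRecOn with
  | nil => exact ⟨0, by simp, by simpa [eq_comm] using hk⟩
  | append_singleton l n ih =>
    rw [concatList_concat] at hcut
    have hn : 1 ≤ n := hl n (by simp)
    simp only [List.sum_append, List.sum_singleton] at hk
    rcases hk.eq_or_lt with hk' | hk'
    · exact ⟨l.length + 1, by simp, by simp [List.take_of_length_le, hk']⟩
    · have hB := hcut _ (Or.inr ⟨_, rfl, rfl⟩)
      rw [sUnion_concatList, ncard_Icc_one] at hB
      have hkl : k ≤ l.sum := by
        rcases hB with h | h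
        · have := h _ ⟨n, ⟨hn, le_rfl⟩, rfl⟩
          simp only at this
          omega
        · have := h _ ⟨1, ⟨le_rfl, hn⟩, rfl⟩
          simp only at this
          omega
      obtain ⟨r, hr, hs⟩ := ih (fun m hm => hl m (by simp [hm])) hkl
        fun B hB => hcut B (Or.inl hB)
      exact ⟨r, by simp; omega, by rw [List.take_append_of_le_length hr, hs]⟩

lemma take_sum_lt {l : List ℕ} (hl : ∀ m ∈ l, 1 ≤ m) {r r' : ℕ} (hr : r < r')
    (hr' : r' ≤ l.length) : (l.take r).sum < (l.take r').sum := by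
  have h : (l.take r).sum < (l.take (r + 1)).sum := by
    rw [List.sum_take_succ l r (by omega)]
    have := hl l[r] (List.getElem_mem _)
    omega
  refine h.trans_le ?_
  have h2 : (l.take r').take (r + 1) = l.take (r + 1) := by
    rw [List.take_take, min_eq_left (by omega)]
  rw [← h2]
  exact (List.take_sublist _ _).sum_le_sum (by simp)

/-! ### Splitting at the cut -/

lemma IPle.sum_eq {l : List ℕ} {P : Set (Set ℕ)} {A : Set ℕ} (hA : A ⊆ ⋃₀ P) (hfin : A.Finite)
    (h : IPle (concatList l) (stdIP (restrictIP P A))) : l.sum = A.ncard := by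
  have hu := sUnion_restrictIP hA
  have := congrArg Set.ncard h.1
  rwa [sUnion_concatList, sUnion_stdIP (hu.symm ▸ hfin), hu, ncard_Icc_one, ncard_Icc_one] at this

/-- splitting occurrences of a concatenation of single blocks
across a concatenation `𝔏 • 𝔐`, as a disjoint union over the split point `r`. -/
theorem occurrences_split_concat (ns : List ℕ) (hns : ∀ m ∈ ns, 1 ≤ m)
    (L M : Set (Set ℕ)) (hL : IsStdIP L) (hM : IsStdIP M) :
    ({A : Set ℕ | A ⊆ ⋃₀ (concatIP L M) ∧
        IPle (concatList ns) (stdIP (restrictIP (concatIP L M) A))}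
      = ⋃ r ∈ Set.Iic ns.length, piece16 L M ns r) ∧
    (Set.Iic ns.length).PairwiseDisjoint (piece16 L M ns) := by
  obtain ⟨⟨_, hLb, _⟩, c, hLc⟩ := hL
  obtain ⟨⟨_, hMb, _⟩, d, hMd⟩ := hM
  have hcard : (⋃₀ L).ncard = c := by rw [hLc, ncard_Icc_one]
  set K := concatIP L M with hK
  have hKu : ⋃₀ K = Set.Icc 1 (c + d) := sUnion_concatIP hLc hMd
  have hH : ⋃₀ shiftIP (⋃₀ L).ncard M = Set.Icc (1 + c) (d + c) := by
    rw [sUnion_shiftIP, hMd, hcard, Set.image_add_const_Icc]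
  have hcut : ∀ B ∈ K, B ⊆ ⋃₀ L ∨ B ⊆ ⋃₀ shiftIP (⋃₀ L).ncard M := by
    rintro B (hB | hB)
    · exact Or.inl (Set.subset_sUnion_of_mem hB)
    · exact Or.inr (Set.subset_sUnion_of_mem hB)
  have hKb : ∀ B ∈ K, IsIntervalBlock B := by
    rintro B (hB | ⟨B, hB, rfl⟩)
    · exact hLb B hB
    · obtain ⟨h1, h2, h3⟩ := hMb B hB
      refine ⟨h1.image _, ?_, ?_⟩
      · rintro _ ⟨x, hx, rfl⟩
        exact (h2 x hx).trans (Nat.le_add_right _ _)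
      · rintro _ ⟨x, hx, rfl⟩ _ ⟨z, hz, rfl⟩ y hxy hyz
        simp only at hxy hyz
        exact ⟨y - (⋃₀ L).ncard, h3 x hx z hz _ (by omega) (by omega), by simp only; omega⟩
  have hdisj : Disjoint (⋃₀ L) (⋃₀ shiftIP (⋃₀ L).ncard M) := by
    rw [hH, hLc, Set.disjoint_left]
    rintro x ⟨_, h⟩ ⟨h', _⟩
    omega
  have hfin : ∀ A ⊆ ⋃₀ K, A.Finite := fun A hA =>
    (hKu ▸ Set.finite_Icc _ _ : (⋃₀ K).Finite).subset hA
  -- `std 𝔎(A) = std 𝔎(A₁) • std 𝔎(A₂)`, with the ground sets of both factors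
  have hsplit : ∀ A ⊆ ⋃₀ K,
      stdIP (restrictIP K A) = concatIP (stdIP (restrictIP K (A ∩ ⋃₀ L)))
        (stdIP (restrictIP K (A ∩ ⋃₀ shiftIP (⋃₀ L).ncard M))) ∧
      ⋃₀ stdIP (restrictIP K (A ∩ ⋃₀ L)) = Set.Icc 1 (A ∩ ⋃₀ L).ncard ∧
      ⋃₀ stdIP (restrictIP K (A ∩ ⋃₀ shiftIP (⋃₀ L).ncard M))
        = Set.Icc 1 (A ∩ ⋃₀ shiftIP (⋃₀ L).ncard M).ncard := by
    intro A hA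
    have hu : ∀ T, ⋃₀ restrictIP K (A ∩ T) = A ∩ T := fun T =>
      sUnion_restrictIP (Set.inter_subset_left.trans hA)
    have hf : ∀ T, (⋃₀ restrictIP K (A ∩ T)).Finite := fun T =>
      (hu T).symm ▸ hfin _ (Set.inter_subset_left.trans hA)
    refine ⟨?_, by rw [sUnion_stdIP (hf _), hu], by rw [sUnion_stdIP (hf _), hu]⟩
    rw [restrictIP_split hKb hdisj hcut]
    refine stdIP_union (c := c) (hf _) (hf _) ?_ ?_
    · rw [hu, hLc]
      exact fun x hx => hx.2.2
    · rw [hu, hH]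
      intro x hx
      have := hx.2.1
      omega
  have hpiece : ∀ A ⊆ ⋃₀ K, ∀ r,
      (A ∈ piece16 L M ns r ↔ IPle (concatList ns) (stdIP (restrictIP K A)) ∧
        (ns.take r).sum = (A ∩ ⋃₀ L).ncard) := by
    intro A hA r
    obtain ⟨h1, h2, h3⟩ := hsplit A hA
    have hconcat : (ns.take r).sum = (A ∩ ⋃₀ L).ncard →
        (IPle (concatList ns) (stdIP (restrictIP K A)) ↔
          IPle (concatList (ns.take r)) (stdIP (restrictIP K (A ∩ ⋃₀ L))) ∧
          IPle (concatList (ns.drop r))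
            (stdIP (restrictIP K (A ∩ ⋃₀ shiftIP (⋃₀ L).ncard M)))) := by
      intro hs
      rw [← IPle_concatIP_iff (hs ▸ sUnion_concatList _) (sUnion_concatList _) h2 h3
        (concatList_nonempty fun m hm => hns m (List.mem_of_mem_take hm))
        (concatList_nonempty fun m hm => hns m (List.mem_of_mem_drop hm)),
        ← concatList_append, List.take_append_drop, h1]
    constructor
    · rintro ⟨_, hp, hq⟩
      have hs := IPle.sum_eq (Set.inter_subset_left.trans hA)
        (hfin _ (Set.inter_subset_left.trans hA)) hp
      exact ⟨(hconcat hs).2 ⟨hp, hq⟩, hs⟩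
    · rintro ⟨h, hs⟩
      exact ⟨hA, (hconcat hs).1 h⟩
  refine ⟨?_, ?_⟩
  · ext A
    simp only [Set.mem_iUnion, Set.mem_Iic, exists_prop, Set.mem_ofPred_eq]
    constructor
    · rintro ⟨hA, h⟩
      obtain ⟨h1, h2, h3⟩ := hsplit A hA
      have hle : (A ∩ ⋃₀ L).ncard ≤ ns.sum := by
        rw [IPle.sum_eq hA (hfin A hA) h]
        exact Set.ncard_le_ncard Set.inter_subset_left (hfin A hA)
      obtain ⟨r, hr, hs⟩ := exists_take_sum hns hle (by
        intro B hB
        obtain ⟨C, hC, hBC⟩ := h.2 B hB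
        rw [h1] at hC
        rcases hC with hC | ⟨C, hC, rfl⟩
        · left
          intro x hx
          have : x ∈ Set.Icc 1 (A ∩ ⋃₀ L).ncard := h2 ▸ ⟨C, hC, hBC hx⟩
          exact this.2
        · right
          intro x hx
          obtain ⟨y, hy, rfl⟩ := hBC hx
          have := (h3.subset (Set.mem_sUnion_of_mem hy hC)).1
          simp only [h2, ncard_Icc_one]
          omega)
      exact ⟨r, hr, (hpiece A hA r).2 ⟨h, hs⟩⟩
    · rintro ⟨r, _, hA⟩
      exact ⟨hA.1, ((hpiece A hA.1 r).1 hA).1⟩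
  · intro r hr r' hr' hne
    refine Set.disjoint_left.2 fun A hA hA' => ?_
    have h1 := ((hpiece A hA.1 r).1 hA).2
    have h2 := ((hpiece A hA.1 r').1 hA').2
    rw [Set.mem_Iic] at hr hr'
    rcases lt_or_gt_of_ne hne with h | h
    · have := take_sum_lt hns h hr'
      omega
    · have := take_sum_lt hns h hr
      omega
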